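/- Let a, p be real numbers with p ≠ 1 and let d, m, n be positive integers. Then M_n^{({m}_d)}(a,p) = Σ_{n ≥ n_1 ≥ … ≥ n_{md} ≥ 1} [ (Π_{r=1}^{d} (1-p)^{n_{mr−m+1} − n_{mr}}) / (n_1 ⋯ n_{md}) ] · [ (1-p+ap)^{n_{md}} − (1-p)^{n_{md}} ], where {m}_d denotes the exponent tuple consisting of m repeated d times. -/

import Mathlib

/-- `ent m α` is the entry `n_{α+1}` (0-indexed access) of the index tuple `m`,
with junk value `1` out of range. -/
def ent {L : ℕ} (m : Fin L → ℕ) (α : ℕ) : ℕ :=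
  if h : α < L then m ⟨α, h⟩ else 1

/-- The finite set of index tuples `(n₁,…,n_L)` with `n ≥ n₁ ≥ n₂ ≥ ⋯ ≥ n_L ≥ 1`. -/
def Idx (n L : ℕ) : Finset (Fin L → ℕ) :=
  (Fintype.piFinset fun _ : Fin L => Finset.Icc 1 n).filter
    fun m => ∀ i j : Fin L, i ≤ j → m j ≤ m i

/-- Generalized multiple harmonic-star value
`ζ*_k(s₁,…,s_d; a) = ∑_{k ≥ n₁ ≥ ⋯ ≥ n_d ≥ 1} a^{n_d}/(n₁^{s₁} ⋯ n_d^{s_d})`. -/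
noncomputable def zetaStarK (k : ℕ) (s : List ℕ) (a : ℝ) : ℝ :=
  ∑ m ∈ Idx k s.length,
    a ^ ent m (s.length - 1) / ∏ i : Fin s.length, (m i : ℝ) ^ s.get i

/-- Mneimneh-like sum
`M_n^{(s₁,…,s_d)}(a,p) = ∑_{k=1}^n C(n,k)·p^k·(1-p)^{n-k}·ζ*_k(s;a)`. -/
noncomputable def M (n : ℕ) (s : List ℕ) (a p : ℝ) : ℝ :=
  ∑ k ∈ Finset.Icc 1 n, (n.choose k : ℝ) * p ^ k * (1 - p) ^ (n - k) * zetaStarK k s a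

open Finset

noncomputable def chain : (ℕ → ℕ → ℕ → ℝ) → ℕ → (ℕ → ℝ) → ℕ → ℝ
  | _, 0, g, n => g n
  | K, L + 1, g, n => ∑ j ∈ Finset.Icc 1 n, K 0 n j * chain (fun i => K (i + 1)) L g j

def ee {L : ℕ} (n : ℕ) (t : Fin L → ℕ) : ℕ → ℕ
  | 0 => n
  | i + 1 => ent t i

theorem ent_cons_zero {L : ℕ} (j : ℕ) (t : Fin L → ℕ) :
    ent (Fin.cons j t : Fin (L + 1) → ℕ) 0 = j := by
  simp [ent]

theorem ent_cons_succ {L : ℕ} (j : ℕ) (t : Fin L → ℕ) (i : ℕ) :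
    ent (Fin.cons j t : Fin (L + 1) → ℕ) (i + 1) = ent t i := by
  unfold ent
  by_cases h : i < L
  · have h1 : i + 1 < L + 1 := by omega
    rw [dif_pos h, dif_pos h1]
    exact Fin.cons_succ (α := fun _ => ℕ) j t ⟨i, h⟩
  · have h1 : ¬ (i + 1 < L + 1) := by omega
    rw [dif_neg h, dif_neg h1]

theorem ee_cons {L : ℕ} (n j : ℕ) (t : Fin L → ℕ) (i : ℕ) :
    ee n (Fin.cons j t : Fin (L + 1) → ℕ) (i + 1) = ee j t i := by
  cases i with
  | zero => exact ent_cons_zero j t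
  | succ i => exact ent_cons_succ j t i

theorem mem_Idx {n L : ℕ} (t : Fin L → ℕ) :
    t ∈ Idx n L ↔ (∀ i, 1 ≤ t i ∧ t i ≤ n) ∧ ∀ i j : Fin L, i ≤ j → t j ≤ t i := by
  simp [Idx]

theorem sum_Idx_succ (n L : ℕ) (F : (Fin (L + 1) → ℕ) → ℝ) :
    ∑ t ∈ Idx n (L + 1), F t =
      ∑ j ∈ Finset.Icc 1 n, ∑ t ∈ Idx j L, F (Fin.cons j t) := by
  rw [Finset.sum_sigma']
  refine Finset.sum_bij' (fun t _ => ⟨t 0, Fin.tail t⟩) (fun x _ => Fin.cons x.1 x.2) ?_ ?_ ?_ ?_ ?_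
  · intro t ht
    rw [mem_Idx] at ht
    rw [Finset.mem_sigma, mem_Idx, Finset.mem_Icc]
    refine ⟨ht.1 0, fun i => ⟨(ht.1 i.succ).1, ht.2 0 i.succ (Fin.zero_le _)⟩, fun i j hij => ?_⟩
    exact ht.2 _ _ (Fin.succ_le_succ_iff.2 hij)
  · rintro ⟨j, t⟩ h
    rw [Finset.mem_sigma, mem_Idx, Finset.mem_Icc] at h
    obtain ⟨h1, h2, h3⟩ := h
    simp only at h1 h2 h3
    rw [mem_Idx]
    refine ⟨fun i => ?_, fun i k hik => ?_⟩
    · refine Fin.cases ?_ (fun i => ?_) i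
      · simpa using h1
      · simpa using ⟨(h2 i).1, (h2 i).2.trans h1.2⟩
    · induction i using Fin.cases with
      | zero =>
        induction k using Fin.cases with
        | zero => simp
        | succ k => simpa using (h2 k).2
      | succ i =>
        induction k using Fin.cases with
        | zero => simp at hik
        | succ k => simpa using h3 i k (Fin.succ_le_succ_iff.1 hik)
  · intro t _
    exact Fin.cons_self_tail t
  · rintro ⟨j, t⟩ _
    simp
  · intro t _
    simp only [Fin.cons_self_tail]

theorem chain_eq (L : ℕ) : ∀ (K : ℕ → ℕ → ℕ → ℝ) (g : ℕ → ℝ) (n : ℕ),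
    chain K L g n = ∑ t ∈ Idx n L,
      (∏ i ∈ range L, K i (ee n t i) (ee n t (i + 1))) * g (ee n t L) := by
  induction L with
  | zero =>
    intro K g n
    have : Idx n 0 = {Fin.elim0} := by
      ext t
      simp only [mem_Idx, Finset.mem_singleton]
      constructor
      · intro _; exact Subsingleton.elim _ _
      · intro _; exact ⟨fun i => i.elim0, fun i => i.elim0⟩
    rw [this]
    simp [chain, ee]
  | succ L ih =>
    intro K g n
    rw [sum_Idx_succ]
    simp only [chain]
    refine Finset.sum_congr rfl fun j _ => ?_
    rw [ih, Finset.mul_sum]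
    refine Finset.sum_congr rfl fun t _ => ?_
    rw [Finset.prod_range_succ']
    simp only [ee_cons]
    simp only [ee]
    ring

theorem chain_congr (L : ℕ) : ∀ (K K' : ℕ → ℕ → ℕ → ℝ) (g g' : ℕ → ℝ) (n : ℕ),
    (∀ i < L, K i = K' i) → (∀ j, g j = g' j) → chain K L g n = chain K' L g' n := by
  induction L with
  | zero => intro K K' g g' n _ hg; exact hg n
  | succ L ih =>
    intro K K' g g' n hK hg
    simp only [chain]
    refine Finset.sum_congr rfl fun j _ => ?_
    rw [hK 0 (by omega), ih _ (fun i => K' (i + 1)) g g' j (fun i hi => hK (i + 1) (by omega)) hg]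

theorem chain_add (L L' : ℕ) : ∀ (K : ℕ → ℕ → ℕ → ℝ) (g : ℕ → ℝ) (n : ℕ),
    chain K (L' + L) g n = chain K L (chain (fun i => K (i + L)) L' g) n := by
  induction L with
  | zero => intro K g n; rfl
  | succ L ih =>
    intro K g n
    rw [← add_assoc]
    simp only [chain]
    refine Finset.sum_congr rfl fun j _ => ?_
    rw [ih]
    rfl

noncomputable def BB (p : ℝ) (f : ℕ → ℝ) (n : ℕ) : ℝ :=
  ∑ k ∈ range (n + 1), (n.choose k : ℝ) * p ^ k * (1 - p) ^ (n - k) * f k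

/-- basic recursion -/
theorem BB_succ (p : ℝ) (f : ℕ → ℝ) (n : ℕ) :
    BB p f (n + 1) = (1 - p) * BB p f n + p * BB p (fun k => f (k + 1)) n := by
  unfold BB
  rw [Finset.sum_range_succ', Finset.mul_sum, Finset.mul_sum]
  rw [Finset.sum_range_succ' (fun i => (1 - p) * _)]
  have h : ∀ k ∈ range (n + 1), ((n + 1).choose (k + 1) : ℝ) * p ^ (k + 1) *
      (1 - p) ^ (n + 1 - (k + 1)) * f (k + 1) =
      p * ((n.choose k : ℝ) * p ^ k * (1 - p) ^ (n - k) * f (k + 1)) +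
      (n.choose (k + 1) : ℝ) * p ^ (k + 1) * (1 - p) ^ (n - k) * f (k + 1) := by
    intro k _
    rw [Nat.choose_succ_succ, Nat.add_sub_add_right]
    push_cast
    ring
  rw [Finset.sum_congr rfl h, Finset.sum_add_distrib]
  rw [Finset.sum_range_succ (fun k => (n.choose (k + 1) : ℝ) * p ^ (k + 1) * (1 - p) ^ (n - k) * f (k + 1))]
  have h2 : ∀ k ∈ range n, (n.choose (k + 1) : ℝ) * p ^ (k + 1) * (1 - p) ^ (n - k) * f (k + 1)
      = (1 - p) * ((n.choose (k + 1) : ℝ) * p ^ (k + 1) * (1 - p) ^ (n - (k + 1)) * f (k + 1)) := by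
    intro k hk
    have : n - k = (n - (k + 1)) + 1 := by have := Finset.mem_range.1 hk; omega
    rw [this, pow_succ]
    ring
  rw [Finset.sum_congr rfl h2]
  simp
  ring

theorem BB_shift_div (p : ℝ) (f : ℕ → ℝ) (hf : f 0 = 0) (n : ℕ) :
    p * BB p (fun k => f (k + 1) / ((k + 1 : ℕ) : ℝ)) n = BB p f (n + 1) / ((n + 1 : ℕ) : ℝ) := by
  unfold BB
  rw [Finset.sum_range_succ' _ (n + 1), hf, mul_zero, add_zero, Finset.mul_sum, Finset.sum_div]
  refine Finset.sum_congr rfl fun k _ => ?_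
  have h := Nat.add_one_mul_choose_eq n k
  have h' : ((n + 1 : ℕ) : ℝ) * n.choose k = (n + 1).choose (k + 1) * ((k + 1 : ℕ) : ℝ) := by
    exact_mod_cast h
  have hk : ((k + 1 : ℕ) : ℝ) ≠ 0 := by positivity
  have hn : ((n + 1 : ℕ) : ℝ) ≠ 0 := by positivity
  rw [Nat.add_sub_add_right, mul_div_assoc', mul_div_assoc', div_eq_div_iff hk hn]
  linear_combination (p ^ (k + 1) * (1 - p) ^ (n - k) * f (k + 1)) * h'

theorem BB_H (p : ℝ) (f : ℕ → ℝ) (hf : f 0 = 0) (n : ℕ) :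
    BB p (fun k => ∑ j ∈ Finset.Icc 1 k, f j / (j : ℝ)) n =
      ∑ j ∈ Finset.Icc 1 n, BB p f j / (j : ℝ) := by
  induction n with
  | zero => simp [BB]
  | succ n ih =>
    rw [BB_succ, Finset.sum_Icc_succ_top (by omega), ← ih, ← BB_shift_div p f hf]
    have : BB p (fun k => ∑ j ∈ Finset.Icc 1 (k + 1), f j / (j : ℝ)) n =
        BB p (fun k => ∑ j ∈ Finset.Icc 1 k, f j / (j : ℝ)) n +
        BB p (fun k => f (k + 1) / ((k + 1 : ℕ) : ℝ)) n := by
      unfold BB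
      rw [← Finset.sum_add_distrib]
      refine Finset.sum_congr rfl fun k _ => ?_
      simp only [Finset.sum_Icc_succ_top (Nat.le_add_left 1 k)]
      ring
    rw [this]
    ring

theorem BB_D (p : ℝ) (f : ℕ → ℝ) (hf : f 0 = 0) (n : ℕ) :
    BB p (fun k => f k / (k : ℝ)) n =
      ∑ j ∈ Finset.Icc 1 n, (1 - p) ^ (n - j) / (j : ℝ) * BB p f j := by
  induction n with
  | zero => simp [BB]
  | succ n ih =>
    rw [BB_succ, Finset.sum_Icc_succ_top (by omega), BB_shift_div p f hf, ih, Finset.mul_sum]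
    congr 1
    · refine Finset.sum_congr rfl fun j hj => ?_
      have : n + 1 - j = (n - j) + 1 := by have := Finset.mem_Icc.1 hj; omega
      rw [this, pow_succ]
      ring
    · simp
      ring

theorem BB_Dpow (p : ℝ) (m : ℕ) : ∀ (f : ℕ → ℝ) (_ : f 0 = 0) (n : ℕ),
    BB p (fun k => f k / (k : ℝ) ^ m) n =
      chain (fun _ x j => (1 - p) ^ (x - j) / (j : ℝ)) m (BB p f) n := by
  induction m with
  | zero => intro f hf n; simp [chain]
  | succ m ih =>
    intro f hf n
    have h : (fun k : ℕ => f k / (k : ℝ) ^ (m + 1)) =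
        fun k : ℕ => (fun k : ℕ => f k / (k : ℝ) ^ m) k / (k : ℝ) := by
      funext k
      rw [pow_succ, div_div]
    rw [h, BB_D p _ (by simp [hf])]
    simp only [chain]
    refine Finset.sum_congr rfl fun j _ => ?_
    rw [ih f hf]

noncomputable def KK (m : ℕ) (p : ℝ) : ℕ → ℕ → ℕ → ℝ :=
  fun i x j => (if m ∣ i then 1 else (1 - p) ^ (x - j)) / (j : ℝ)

theorem block (p : ℝ) (m : ℕ) (hm : 0 < m) (f : ℕ → ℝ) (hf : f 0 = 0) (n : ℕ) :
    BB p (fun k => ∑ j ∈ Finset.Icc 1 k, f j / (j : ℝ) ^ m) n =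
      chain (KK m p) m (BB p f) n := by
  obtain ⟨m, rfl⟩ : ∃ m', m = m' + 1 := ⟨m - 1, by omega⟩
  have h : (fun k => ∑ j ∈ Finset.Icc 1 k, f j / (j : ℝ) ^ (m + 1)) =
      (fun k => ∑ j ∈ Finset.Icc 1 k, (fun k : ℕ => f k / (k : ℝ) ^ m) j / (j : ℝ)) := by
    funext k
    refine Finset.sum_congr rfl fun j _ => ?_
    rw [pow_succ, div_div]
  rw [h, BB_H p _ (by simp [hf])]
  simp only [chain]
  refine Finset.sum_congr rfl fun j _ => ?_
  rw [BB_Dpow p m f hf]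
  rw [chain_congr m (fun i => KK (m + 1) p (i + 1)) (fun _ x j => (1 - p) ^ (x - j) / (j : ℝ))
    (BB p f) (BB p f) j _ (fun _ => rfl)]
  · simp [KK]
    ring
  · intro i hi
    have : ¬ (m + 1 ∣ i + 1) := fun h => by
      have := Nat.le_of_dvd (by omega) h
      omega
    funext x y
    simp only [KK, if_neg this]

theorem main_chain (p : ℝ) (m : ℕ) (hm : 0 < m) (f : ℕ → ℝ) (hf : f 0 = 0) (d : ℕ) : ∀ n : ℕ,
    BB p (chain (fun _ _ j => 1 / (j : ℝ) ^ m) d f) n = chain (KK m p) (m * d) (BB p f) n := by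
  induction d with
  | zero => intro n; rfl
  | succ d ih =>
    intro n
    have h : chain (fun _ _ j => 1 / (j : ℝ) ^ m) (d + 1) f =
        (fun k => ∑ j ∈ Finset.Icc 1 k,
          chain (fun _ _ j => 1 / (j : ℝ) ^ m) d f j / (j : ℝ) ^ m) := by
      funext k
      simp only [chain]
      refine Finset.sum_congr rfl fun j _ => ?_
      ring
    have h0 : chain (fun _ _ j => 1 / (j : ℝ) ^ m) d f 0 = 0 := by
      cases d with
      | zero => exact hf
      | succ d => simp [chain]
    rw [h, block p m hm _ h0, Nat.mul_succ, chain_add]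
    refine chain_congr _ _ _ _ _ _ (fun _ _ => rfl) fun j => ?_
    rw [ih]
    refine chain_congr _ _ _ _ _ _ (fun i _ => ?_) fun _ => rfl
    funext x y
    simp [KK]

theorem tele (q : ℝ) (u : ℕ → ℕ) (m : ℕ) : ∀ (_ : ∀ i, i < m → u (i + 1) ≤ u i),
    ∏ i ∈ range m, q ^ (u i - u (i + 1)) = q ^ (u 0 - u m) := by
  induction m with
  | zero => simp
  | succ m ih =>
    intro h
    rw [Finset.prod_range_succ, ih (fun i hi => h i (by omega)), ← pow_add]
    congr 1
    have h1 := h m (by omega)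
    have h2 : u m ≤ u 0 := by
      clear ih h1
      induction m with
      | zero => exact le_rfl
      | succ m ih => exact (h m (by omega)).trans (ih fun i hi => h i (by omega))
    omega

theorem prod_blocks (q : ℝ) (m : ℕ) (hm : 0 < m) (v : ℕ → ℕ) (d : ℕ) :
    ∀ (_ : ∀ i, i + 1 < m * d → v (i + 2) ≤ v (i + 1)),
    ∏ i ∈ range (m * d), (if m ∣ i then 1 else q ^ (v i - v (i + 1))) =
      ∏ r ∈ range d, q ^ (v (m * r + 1) - v (m * (r + 1) - 1 + 1)) := by
  induction d with
  | zero => simp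
  | succ d ih =>
    intro h
    rw [Nat.mul_succ] at h
    rw [Nat.mul_succ, Finset.prod_range_add, Finset.prod_range_succ, ih fun i hi => h i (by omega)]
    congr 1
    obtain ⟨m, rfl⟩ : ∃ m', m = m' + 1 := ⟨m - 1, by omega⟩
    rw [Finset.prod_range_succ']
    have h1 : ∀ k ∈ range m, (if m + 1 ∣ (m + 1) * d + (k + 1) then (1 : ℝ) else
        q ^ (v ((m + 1) * d + (k + 1)) - v ((m + 1) * d + (k + 1) + 1))) =
        q ^ ((fun k => v ((m + 1) * d + 1 + k)) k - (fun k => v ((m + 1) * d + 1 + k)) (k + 1)) := by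
      intro k hk
      have hk := Finset.mem_range.1 hk
      rw [if_neg]
      · have e1 : (m + 1) * d + (k + 1) = (m + 1) * d + 1 + k := by ring
        simp only [e1, add_assoc]
      · intro hd
        rw [Nat.dvd_add_right (Dvd.intro _ rfl)] at hd
        have := Nat.le_of_dvd (by omega) hd
        omega
    rw [Finset.prod_congr rfl h1, tele]
    · have e1 : (m + 1) * (d + 1) - 1 + 1 = (m + 1) * d + 1 + m := by
        rw [Nat.mul_succ]
        omega
      rw [if_pos (by simp), mul_one, e1, add_zero]
    · intro i hi
      have := h ((m + 1) * d + i) (by omega)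
      have e1 : (m + 1) * d + 1 + (i + 1) = (m + 1) * d + i + 2 := by ring
      have e2 : (m + 1) * d + 1 + i = (m + 1) * d + i + 1 := by ring
      simp only [e1, e2]
      exact this

theorem ent_lt {L : ℕ} (t : Fin L → ℕ) (i : ℕ) (h : i < L) : ent t i = t ⟨i, h⟩ := dif_pos h

theorem ee_last {L : ℕ} (n : ℕ) (t : Fin L → ℕ) (h : 0 < L) : ee n t L = ent t (L - 1) := by
  cases L with
  | zero => omega
  | succ L => rfl

theorem zeta_aux (k : ℕ) (m d : ℕ) (hd : 0 < d) (a : ℝ) (s : List ℕ) (hs : s.length = d)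
    (hs' : ∀ i, s.get i = m) :
    zetaStarK k s a = chain (fun _ _ j => 1 / (j : ℝ) ^ m) d
      (fun k => if k = 0 then 0 else a ^ k) k := by
  subst hs
  rw [chain_eq, zetaStarK]
  refine Finset.sum_congr rfl fun t ht => ?_
  rw [mem_Idx] at ht
  have hl : ee k t s.length = ent t (s.length - 1) := by
    exact ee_last k t hd
  have hne : ent t (s.length - 1) ≠ 0 := by
    rw [ent_lt _ _ (by omega)]
    have := (ht.1 ⟨s.length - 1, by omega⟩).1
    omega
  rw [hl, if_neg hne, Finset.prod_range]
  simp only [hs', ee]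
  rw [Finset.prod_div_distrib, Finset.prod_const_one, div_mul_eq_mul_div, one_mul]
  congr 1
  refine Finset.prod_congr rfl fun i _ => ?_
  rw [ent_lt _ _ i.2]

theorem stmt_4 (a p : ℝ) (hp : p ≠ 1) (d m n : ℕ) (hd : 0 < d) (hm : 0 < m)
    (hn : 0 < n) :
    M n (List.replicate d m) a p =
      ∑ t ∈ Idx n (m * d),
        (∏ r ∈ Finset.range d, (1 - p) ^ (ent t (m * r) - ent t (m * (r + 1) - 1))) /
          (∏ i ∈ Finset.range (m * d), (ent t i : ℝ)) *
          ((1 - p + a * p) ^ ent t (m * d - 1) - (1 - p) ^ ent t (m * d - 1)) := by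
  set f : ℕ → ℝ := fun k => if k = 0 then 0 else a ^ k with hf
  have hB : ∀ j, BB p f j = (1 - p + a * p) ^ j - (1 - p) ^ j := by
    intro j
    rw [add_comm (1 - p), add_pow, Finset.sum_range_succ', BB, Finset.sum_range_succ']
    simp only [hf]
    simp
    refine Finset.sum_congr rfl fun k _ => ?_
    rw [mul_pow]
    ring
  have hz : ∀ k, zetaStarK k (List.replicate d m) a =
      chain (fun _ _ j => 1 / (j : ℝ) ^ m) d f k := fun k =>
    zeta_aux k m d hd a _ (by simp) (by simp)
  have hM : M n (List.replicate d m) a p =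
      BB p (chain (fun _ _ j => 1 / (j : ℝ) ^ m) d f) n := by
    rw [M, BB, Finset.range_eq_Ico, Finset.sum_eq_sum_Ico_succ_bot (by omega)]
    have h0 : chain (fun _ _ j => 1 / (j : ℝ) ^ m) d f 0 = 0 := by
      cases d with
      | zero => omega
      | succ d => simp [chain]
    rw [h0, mul_zero, zero_add]
    refine Finset.sum_congr (by ext; simp) fun k _ => ?_
    rw [hz]
  rw [hM, main_chain p m hm f (by simp [hf]), chain_eq]
  refine Finset.sum_congr rfl fun t ht => ?_
  rw [mem_Idx] at ht
  have hpos : 0 < m * d := Nat.mul_pos hm hd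
  have hl : ee n t (m * d) = ent t (m * d - 1) := by
    exact ee_last n t hpos
  rw [hB, hl]
  congr 1
  simp only [KK]
  rw [Finset.prod_div_distrib, prod_blocks (1 - p) m hm (ee n t) d]
  · rfl
  · intro i hi
    change ent t (i + 1) ≤ ent t i
    rw [ent_lt _ _ hi, ent_lt _ i (by omega)]
    exact ht.2 _ _ (by simp [Fin.le_def])
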